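/- Let H be a separable complex Hilbert space, let 𝒜 ⊆ B(H) be an abelian von Neumann algebra, and let n₀ ≥ 1 be an integer. Assume that for every finite subset F ⊆ H and every ε > 0 there exists a set X ⊆ H with |X| ≤ n₀ such that every x ∈ F lies at distance strictly less than ε from the linear span of {a ξ : a ∈ 𝒜, ξ ∈ X}. Then there exists a set X ⊆ H with |X| ≤ n₀ such that the closed linear span of {a ξ : a ∈ 𝒜, ξ ∈ X} is all of H, i.e., 𝒜 admits a cyclic set of at most n₀ vectors. -/

import Mathlib

/-!
An approximating tuple `ζ` gives a matrix `B` over the algebra with `B ζ` close to a prescribed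
tuple `ξ`. If `det (B + τ)` is injective on `H` for some small `τ` in the algebra, then
`η = (B + τ) ζ` is still close to `ξ`, and Cramer's rule puts `ζ` in the closed submodule generated
by `η`. So the tuples whose span meets a given nonempty open set are dense, and Baire's theorem,
applied along a countable basis, produces a cyclic tuple.

To find `τ`, fix more small scalars than the degree of `p = charpoly (-B)` and glue them along
kernel projections: each new scalar is used exactly where `p` vanishes at the operator built so
far. A vector killed by `p(τ)` is then killed by `p(t)` for all these scalars `t`. As `p` is monic,
the elements `p(t)` generate the unit ideal, so the vector is zero.
-/

open Polynomial TopologicalSpace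
open scoped Finset

section EvaluationAtScalars

variable {K R : Type*} [Field K] [CommRing R] [Algebra K R] {p : R[X]} {T : Finset K}

theorem span_eval_algebraMap_eq_top_of_monic (hp : p.Monic) (hT : p.natDegree < #T) :
    Ideal.span ((fun t : K ↦ p.eval (algebraMap K R t)) '' T) = ⊤ := by
  by_contra hne
  obtain ⟨m, hm, hle⟩ := Ideal.exists_le_maximal _ hne
  have hroot (t : T) : (p.map (Ideal.Quotient.mk m)).eval (algebraMap K (R ⧸ m) t) = 0 := by
    have hmem : p.eval (algebraMap K R t) ∈ m := hle (Ideal.subset_span ⟨t, t.2, rfl⟩)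
    rw [← Ideal.Quotient.mk_algebraMap, eval_map_apply, Ideal.Quotient.eq_zero_iff_mem.2 hmem]
  refine (hp.map (Ideal.Quotient.mk m)).ne_zero
    (eq_zero_of_natDegree_lt_card_of_eval_eq_zero _
      ((algebraMap K (R ⧸ m)).injective.comp Subtype.val_injective) hroot ?_)
  simpa using natDegree_map_le.trans_lt hT

theorem eq_zero_of_eval_algebraMap_mul_eq_zero (hp : p.Monic) (hT : p.natDegree < #T) {x : R}
    (hx : ∀ t ∈ T, p.eval (algebraMap K R t) * x = 0) : x = 0 := by
  rw [← Ideal.torsionOf_eq_top_iff (R := R), ← top_le_iff,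
    ← span_eval_algebraMap_eq_top_of_monic hp hT, Ideal.span_le]
  rintro _ ⟨t, ht, rfl⟩
  exact hx t ht

end EvaluationAtScalars

section Patching

variable {R : Type*} [CommRing R]

theorem mul_eval_eq_of_mul_eq {e a b : R} (h : e * a = e * b) (p : R[X]) :
    e * p.eval a = e * p.eval b := by
  obtain ⟨c, hc⟩ := sub_dvd_eval_sub a b p
  linear_combination e * hc + c * h

theorem eval_mul_eq_zero_of_eval_patch_mul_eq_zero {p : R[X]} {a b e x : R}
    (he : IsIdempotentElem e) (hae : ∀ y, p.eval a * y = 0 ↔ e * y = y)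
    (hx : p.eval ((1 - e) * a + e * b) * x = 0) : p.eval a * x = 0 ∧ p.eval b * x = 0 := by
  have hee : e * e = e := he
  have hb : e * p.eval ((1 - e) * a + e * b) = e * p.eval b :=
    mul_eval_eq_of_mul_eq (by linear_combination (b - a) * hee) p
  have ha : (1 - e) * p.eval ((1 - e) * a + e * b) = (1 - e) * p.eval a :=
    mul_eval_eq_of_mul_eq (by linear_combination (a - b) * hee) p
  have hax : p.eval a * x = 0 := by
    linear_combination -x * ha + (1 - e) * hx + x * (hae e).2 hee
  exact ⟨hax, by linear_combination e * hx - x * hb - p.eval b * (hae x).1 hax⟩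

end Patching

/-- Kaplansky's Rickart `*`-rings: the right annihilator of every element is generated, as a right
ideal, by a projection. This is encoded by `e * x = x`, which for idempotent `e` says `x ∈ e R`. -/
def IsRickartStarRing (R : Type*) [Ring R] [StarRing R] : Prop :=
  ∀ a : R, ∃ e : R, IsStarProjection e ∧ ∀ x, a * x = 0 ↔ e * x = x

namespace IsRickartStarRing

open scoped IsMulCommutative

variable {R : Type*} [NormedRing R] [IsMulCommutative R] [StarRing R] [CStarRing R]

theorem exists_eval_mul_eq_zero_imp {𝕜 : Type*} [NormedField 𝕜] [NormedAlgebra 𝕜 R]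
    (hR : IsRickartStarRing R) (p : R[X]) (T : Finset 𝕜) :
    ∃ τ : R, ‖τ‖ ≤ ∑ t ∈ T, ‖t‖ ∧
      ∀ x, p.eval τ * x = 0 → ∀ t ∈ T, p.eval (algebraMap 𝕜 R t) * x = 0 := by
  classical
  induction T using Finset.induction_on with
  | empty => exact ⟨0, by simp, by simp⟩
  | insert t T ht ih =>
    obtain ⟨τ, hτ, hker⟩ := ih
    obtain ⟨e, he, hae⟩ := hR (p.eval τ)
    refine ⟨(1 - e) * τ + e * algebraMap 𝕜 R t, ?_, fun x hx ↦ ?_⟩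
    · rw [Finset.sum_insert ht, add_comm, ← Algebra.commutes, ← Algebra.smul_def]
      refine norm_add_le_of_le ?_ ?_
      · exact (norm_smul_le t e).trans (mul_le_of_le_one_right (norm_nonneg t) he.norm_le)
      · simpa only [one_mul] using norm_mul_le_of_le he.one_sub.norm_le hτ
    · obtain ⟨hτx, htx⟩ := eval_mul_eq_zero_of_eval_patch_mul_eq_zero he.isIdempotentElem hae hx
      exact Finset.forall_mem_insert _ _ _ |>.2 ⟨htx, hker x hτx⟩

variable (𝕜 : Type*) [NontriviallyNormedField 𝕜] [NormedAlgebra 𝕜 R]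

include 𝕜 in
theorem exists_norm_le_eval_mem_nonZeroDivisors (hR : IsRickartStarRing R) {p : R[X]}
    (hp : p.Monic) {δ : ℝ} (hδ : 0 < δ) : ∃ τ : R, ‖τ‖ ≤ δ ∧ p.eval τ ∈ nonZeroDivisors R := by
  set N := p.natDegree + 1
  have hball : (Metric.ball (0 : 𝕜) (δ / N)).Infinite :=
    infinite_of_mem_nhds 0 (Metric.ball_mem_nhds _ (by positivity))
  obtain ⟨T, hT, hcard⟩ := hball.exists_subset_card_eq N
  have hsum : ∑ t ∈ T, ‖t‖ ≤ δ := calc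
    ∑ t ∈ T, ‖t‖ ≤ #T • (δ / N) :=
      Finset.sum_le_card_nsmul _ _ _ fun t ht ↦ (mem_ball_zero_iff.1 (hT ht)).le
    _ = δ := by rw [hcard, nsmul_eq_mul, mul_div_cancel₀ _ (by positivity)]
  obtain ⟨τ, hτ, hker⟩ := hR.exists_eval_mul_eq_zero_imp p T
  refine ⟨τ, hτ.trans hsum, mem_nonZeroDivisors_iff_left.2 fun x hx ↦ ?_⟩
  exact eq_zero_of_eval_algebraMap_mul_eq_zero hp (by omega) (hker x hx)

include 𝕜 in
theorem exists_norm_le_det_mem_nonZeroDivisors {ι : Type*} [Fintype ι] [DecidableEq ι]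
    (hR : IsRickartStarRing R) (B : Matrix ι ι R) {δ : ℝ} (hδ : 0 < δ) :
    ∃ τ : R, ‖τ‖ ≤ δ ∧ (Matrix.scalar ι τ + B).det ∈ nonZeroDivisors R := by
  simpa only [Matrix.eval_charpoly, sub_neg_eq_add] using
    exists_norm_le_eval_mem_nonZeroDivisors 𝕜 hR (Matrix.charpoly_monic (-B)) hδ

end IsRickartStarRing

section MatrixAction

open scoped Matrix.Module

variable {ι R M : Type*} [Fintype ι] [DecidableEq ι] [AddCommGroup M]

theorem matrix_smul_apply_mem_span_range [Ring R] [Module R M] (A : Matrix ι ι R) (ζ : ι → M)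
    (i : ι) : (A • ζ) i ∈ Submodule.span R (Set.range ζ) :=
  (Submodule.mem_span_range_iff_exists_fun R).2 ⟨A i, rfl⟩

theorem det_smul_apply_mem_span_range_smul [CommRing R] [Module R M] (A : Matrix ι ι R)
    (ζ : ι → M) (i : ι) : A.det • ζ i ∈ Submodule.span R (Set.range (A • ζ)) := by
  have hcramer : A.adjugate • A • ζ = A.det • ζ := by
    rw [smul_smul, Matrix.adjugate_mul, smul_assoc, one_smul]
  simpa only [hcramer] using! matrix_smul_apply_mem_span_range A.adjugate (A • ζ) i

end MatrixAction

section GenericTuples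

variable {ι R M : Type*} [Finite ι] [Ring R] [AddCommGroup M] [Module R M] [TopologicalSpace M]
  [ContinuousAdd M] [ContinuousConstSMul R M]

theorem isOpen_setOf_inter_span_range_nonempty {U : Set M} (hU : IsOpen U) :
    IsOpen {η : ι → M | (U ∩ Submodule.span R (Set.range η)).Nonempty} := by
  have := Fintype.ofFinite ι
  have hunion : {η : ι → M | (U ∩ Submodule.span R (Set.range η)).Nonempty} =
      ⋃ a : ι → R, (fun η ↦ ∑ i, a i • η i) ⁻¹' U := by
    ext η
    simp only [Set.Nonempty, Set.mem_inter_iff, SetLike.mem_coe,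
      Submodule.mem_span_range_iff_exists_fun, Set.mem_ofPred_eq, Set.mem_iUnion, Set.mem_preimage]
    exact ⟨fun ⟨_, hy, a, ha⟩ ↦ ⟨a, ha ▸ hy⟩, fun ⟨a, ha⟩ ↦ ⟨_, ha, a, rfl⟩⟩
  rw [hunion]
  exact isOpen_iUnion fun a ↦ hU.preimage (by fun_prop)

theorem exists_dense_span_range_of_forall_isOpen [SecondCountableTopology M] [BaireSpace (ι → M)]
    (h : ∀ U : Set M, IsOpen U → U.Nonempty →
      Dense {η : ι → M | (U ∩ Submodule.span R (Set.range η)).Nonempty}) :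
    ∃ ζ : ι → M, Dense (Submodule.span R (Set.range ζ) : Set M) := by
  obtain ⟨b, hb, hempty, hbasis⟩ := exists_countable_basis M
  have hdense : Dense (⋂ U ∈ b, {η : ι → M | (U ∩ Submodule.span R (Set.range η)).Nonempty}) :=
    dense_biInter_of_isOpen
      (fun U hU ↦ isOpen_setOf_inter_span_range_nonempty (hbasis.isOpen hU)) hb
      fun U hU ↦ h U (hbasis.isOpen hU)
        (Set.nonempty_iff_ne_empty.2 (ne_of_mem_of_not_mem hU hempty))
  obtain ⟨ζ, hζ⟩ := hdense.nonempty
  exact ⟨ζ, hbasis.dense_iff.2 fun U hU _ ↦ Set.mem_iInter₂.1 hζ U hU⟩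

end GenericTuples

/-- Approximate cyclicity: finitely many vectors are always within `ε` of the submodule generated
by some `ι`-indexed tuple. For `ι = Fin n` this is the notion with at most `n` generators. -/
def IsApproxCyclic (ι R M : Type*) [Ring R] [SeminormedAddCommGroup M] [Module R M] : Prop :=
  ∀ F : Finset M, ∀ ε : ℝ, 0 < ε →
    ∃ ζ : ι → M, ∀ x ∈ F, ∃ v ∈ Submodule.span R (Set.range ζ), ‖x - v‖ < ε

section OperatorAlgebra

open scoped IsMulCommutative Matrix.Module Pointwise

variable {𝕜 H : Type*} [RCLike 𝕜] [NormedAddCommGroup H] [InnerProductSpace 𝕜 H] [CompleteSpace H]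

/-- The kernel projection of each operator in `S` belongs to `S`, so that `S` is a Rickart
`*`-ring whose annihilators are computed on `H`. Von Neumann algebras have this property. -/
def ContainsKernelProjections (S : StarSubalgebra 𝕜 (H →L[𝕜] H)) : Prop :=
  ∀ a ∈ S, a.ker.starProjection ∈ S

theorem containsKernelProjections_vonNeumannAlgebra {H : Type*} [NormedAddCommGroup H]
    [InnerProductSpace ℂ H] [CompleteSpace H] (𝒜 : VonNeumannAlgebra H) :
    ContainsKernelProjections 𝒜.toStarSubalgebra := by
  intro a ha
  refine (VonNeumannAlgebra.IsStarProjection.mem_iff isStarProjection_starProjection 𝒜).2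
    fun y hy v hv ↦ ?_
  have hcomm : a * y = y * a := VonNeumannAlgebra.mem_commutant_iff.1 hy a ha
  simp only [Submodule.range_starProjection, Submodule.mem_comap, ContinuousLinearMap.coe_coe,
    LinearMap.mem_ker] at hv ⊢
  calc a (y v) = y (a v) := congr($hcomm v)
    _ = 0 := by rw [hv, map_zero]

variable {S : StarSubalgebra 𝕜 (H →L[𝕜] H)}

instance : IsScalarTower 𝕜 S H := ⟨fun _ _ _ ↦ rfl⟩

instance : IsBoundedSMul S H := .of_norm_smul_le fun a ↦ a.val.le_opNorm

namespace ContainsKernelProjections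

theorem isRickartStarRing (hS : ContainsKernelProjections S) : IsRickartStarRing S := by
  intro a
  refine ⟨⟨_, hS a a.2⟩, ⟨Subtype.ext ?_, Subtype.ext ?_⟩, fun x ↦ ?_⟩
  · exact isStarProjection_starProjection.isIdempotentElem
  · exact isStarProjection_starProjection.isSelfAdjoint
  · simp only [Subtype.ext_iff, ContinuousLinearMap.ext_iff]
    exact forall_congr' fun v ↦
      (Submodule.starProjection_eq_self_iff (K := a.val.ker) (v := x.val v)).symm

theorem eq_zero_of_smul_eq_zero (hS : ContainsKernelProjections S) {a : S}
    (ha : a ∈ nonZeroDivisors S) {v : H} (hv : a • v = 0) : v = 0 := by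
  have hae : a * ⟨_, hS a a.2⟩ = 0 := Subtype.ext <| ContinuousLinearMap.ext <|
    Submodule.starProjection_apply_mem (a : H →L[𝕜] H).ker
  have he : (a : H →L[𝕜] H).ker.starProjection = 0 :=
    congr(($((mem_nonZeroDivisors_iff.1 ha).1 _ hae)).1)
  calc v = (a : H →L[𝕜] H).ker.starProjection v := (Submodule.starProjection_eq_self_iff.2 hv).symm
    _ = 0 := by rw [he, zero_apply]

end ContainsKernelProjections

theorem mem_of_smul_mem_of_isClosed {L : Submodule S H} (hL : IsClosed (L : Set H)) {a : S}
    (ha : ∀ w : H, a • w = 0 → w = 0) {v : H} (hv : a • v ∈ L) : v ∈ L := by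
  set K : Submodule 𝕜 H := L.restrictScalars 𝕜
  have : CompleteSpace K := hL.completeSpace_coe
  have hKperp : Kᗮ ∈ Module.End.invtSubmodule (a : H →L[𝕜] H).toLinearMap :=
    ContinuousLinearMap.mem_invtSubmodule_adjoint_iff.1 fun u hu ↦ L.smul_mem (star a) hu
  obtain ⟨k, hk, w, hw, rfl⟩ := K.exists_add_mem_mem_orthogonal v
  have haw : a • w ∈ K := by
    rw [smul_add] at hv
    exact (L.add_mem_iff_right (L.smul_mem a hk)).1 hv
  have haw0 : a • w = 0 := K.orthogonal_disjoint.le_bot ⟨haw, hKperp hw⟩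
  rw [ha w haw0, add_zero]
  exact hk

theorem span_setOf_apply_eq_restrictScalars_span (X : Set H) :
    Submodule.span 𝕜 {w : H | ∃ a : H →L[𝕜] H, a ∈ S ∧ ∃ ξ ∈ X, w = a ξ} =
      (Submodule.span S X).restrictScalars 𝕜 := by
  rw [← Submodule.span_smul_of_span_eq_top (s := (Set.univ : Set S)) Submodule.span_univ]
  congr 1
  ext w
  constructor
  · rintro ⟨a, ha, ξ, hξ, rfl⟩
    exact Set.smul_mem_smul (Set.mem_univ (⟨a, ha⟩ : S)) hξ
  · rintro ⟨a, -, ξ, hξ, rfl⟩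
    exact ⟨a, a.2, ξ, hξ, rfl⟩

variable [IsMulCommutative S] {ι : Type*}

theorem exists_norm_sub_smul_lt_and_mem_topologicalClosure [Fintype ι] [DecidableEq ι]
    (hS : ContainsKernelProjections S) (B : Matrix ι ι S) (ζ : ι → H) {δ : ℝ} (hδ : 0 < δ) :
    ∃ η : ι → H, ‖η - B • ζ‖ < δ ∧
      ∀ i, ζ i ∈ (Submodule.span S (Set.range η)).topologicalClosure := by
  obtain ⟨τ, hτ, hdet⟩ := IsRickartStarRing.exists_norm_le_det_mem_nonZeroDivisors 𝕜
    hS.isRickartStarRing B (δ := δ / (‖ζ‖ + 1)) (by positivity)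
  refine ⟨(Matrix.scalar ι τ + B) • ζ, ?_, fun i ↦ ?_⟩
  · rw [add_smul, add_sub_cancel_right, Matrix.Module.scalar_smul]
    calc ‖τ • ζ‖ ≤ δ / (‖ζ‖ + 1) * ‖ζ‖ := (norm_smul_le τ ζ).trans (by gcongr)
      _ < δ / (‖ζ‖ + 1) * (‖ζ‖ + 1) := by gcongr; exact lt_add_one _
      _ = δ := div_mul_cancel₀ _ (by positivity)
  · refine mem_of_smul_mem_of_isClosed (Submodule.isClosed_topologicalClosure _)
      (fun w ↦ hS.eq_zero_of_smul_eq_zero hdet) (subset_closure ?_)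
    exact det_smul_apply_mem_span_range_smul _ ζ i

variable [Finite ι]

theorem IsApproxCyclic.dense_setOf_inter_span_range_nonempty (h : IsApproxCyclic ι S H)
    (hS : ContainsKernelProjections S) {U : Set H} (hU : IsOpen U) (hne : U.Nonempty) :
    Dense {η : ι → H | (U ∩ Submodule.span S (Set.range η)).Nonempty} := by
  classical
  have := Fintype.ofFinite ι
  rw [Metric.dense_iff]
  intro ξ δ hδ
  obtain ⟨x, hx⟩ := hne
  obtain ⟨ε, hε, hball⟩ := Metric.isOpen_iff.1 hU x hx
  obtain ⟨ζ, hζ⟩ := h (insert x (Finset.univ.image ξ)) (min ε (δ / 2)) (by positivity)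
  obtain ⟨v, hv, hxv⟩ := hζ x (Finset.mem_insert_self _ _)
  have hξ : ∀ j, ∃ b : ι → S, ‖ξ j - ∑ i, b i • ζ i‖ < δ / 2 := fun j ↦ by
    obtain ⟨w, hw, hξw⟩ := hζ (ξ j) (by simp)
    obtain ⟨b, rfl⟩ := (Submodule.mem_span_range_iff_exists_fun S).1 hw
    exact ⟨b, hξw.trans_le (min_le_right _ _)⟩
  choose B hB using hξ
  obtain ⟨η, hη, hζη⟩ :=
    exists_norm_sub_smul_lt_and_mem_topologicalClosure hS (Matrix.of B) ζ (half_pos hδ)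
  refine ⟨η, ?_, mem_closure_iff.1 (?_ : v ∈ closure _) U hU (hball ?_)⟩
  · have hξB : ‖ξ - Matrix.of B • ζ‖ < δ / 2 := (pi_norm_lt_iff (half_pos hδ)).2 hB
    rw [mem_ball_iff_norm, ← sub_sub_sub_cancel_right η ξ (Matrix.of B • ζ)]
    linarith [norm_sub_le (η - Matrix.of B • ζ) (ξ - Matrix.of B • ζ)]
  · exact Submodule.span_le.2 (Set.range_subset_iff.2 hζη) hv
  · rw [mem_ball_iff_norm']
    exact hxv.trans_le (min_le_left _ _)

theorem IsApproxCyclic.exists_dense_span_range [SeparableSpace H] (h : IsApproxCyclic ι S H)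
    (hS : ContainsKernelProjections S) :
    ∃ ζ : ι → H, Dense (Submodule.span S (Set.range ζ) : Set H) :=
  have := UniformSpace.secondCountable_of_separable H
  exists_dense_span_range_of_forall_isOpen fun _ hU hne ↦
    h.dense_setOf_inter_span_range_nonempty hS hU hne

end OperatorAlgebra

theorem exists_fin_subset_range {α : Type*} [Nonempty α] {X : Finset α} {n : ℕ} (hX : #X ≤ n) :
    ∃ ζ : Fin n → α, ↑X ⊆ Set.range ζ := by
  obtain ⟨f⟩ := Function.Embedding.nonempty_of_card_le (α := X) (β := Fin n) (by simpa using hX)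
  exact ⟨Function.extend f Subtype.val fun _ ↦ Classical.arbitrary α,
    fun x hx ↦ ⟨f ⟨x, hx⟩, f.injective.extend_apply _ _ ⟨x, hx⟩⟩⟩

theorem abelian_vonNeumann_approx_cyclic_implies_cyclic_general
    {𝕜 H : Type*} [RCLike 𝕜] [NormedAddCommGroup H] [InnerProductSpace 𝕜 H] [CompleteSpace H]
    [SeparableSpace H] (S : StarSubalgebra 𝕜 (H →L[𝕜] H)) [IsMulCommutative S]
    (hS : ContainsKernelProjections S) (n₀ : ℕ)
    (happrox : ∀ F : Finset H, ∀ ε : ℝ, 0 < ε →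
      ∃ X : Finset H, X.card ≤ n₀ ∧
        ∀ x ∈ F, ∃ v ∈ Submodule.span 𝕜
          {w : H | ∃ a : H →L[𝕜] H, a ∈ S ∧ ∃ ξ ∈ X, w = a ξ}, ‖x - v‖ < ε) :
    ∃ X : Finset H, X.card ≤ n₀ ∧
      (Submodule.span 𝕜
        {w : H | ∃ a : H →L[𝕜] H, a ∈ S ∧ ∃ ξ ∈ X, w = a ξ}).topologicalClosure = ⊤ := by
  classical
  simp only [← Finset.mem_coe, span_setOf_apply_eq_restrictScalars_span] at happrox ⊢
  have hcyclic : IsApproxCyclic (Fin n₀) S H := fun F ε hε ↦ by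
    obtain ⟨X, hX, hXF⟩ := happrox F ε hε
    obtain ⟨ζ, hζ⟩ := exists_fin_subset_range hX
    refine ⟨ζ, fun x hx ↦ ?_⟩
    obtain ⟨v, hv, hxv⟩ := hXF x hx
    exact ⟨v, Submodule.span_mono hζ hv, hxv⟩
  obtain ⟨ζ, hζ⟩ := hcyclic.exists_dense_span_range hS
  refine ⟨Finset.univ.image ζ, Finset.card_image_le.trans (by simp), ?_⟩
  rw [Finset.coe_image, Finset.coe_univ, Set.image_univ]
  exact Submodule.dense_iff_topologicalClosure_eq_top.1 hζ

/-- Proposition 3.4 (2° ⟺ 3°), the nontrivial direction: for an abelian von Neumann algebra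
`𝒜` on a separable Hilbert space, approximate `n₀`-cyclicity implies the existence of a
cyclic set of at most `n₀` vectors. -/
theorem abelian_vonNeumann_approx_cyclic_implies_cyclic
    (H : Type*) [NormedAddCommGroup H] [InnerProductSpace ℂ H] [CompleteSpace H]
    [TopologicalSpace.SeparableSpace H]
    (𝒜 : VonNeumannAlgebra H)
    (habelian : ∀ x ∈ 𝒜, ∀ y ∈ 𝒜, x * y = y * x)
    (n₀ : ℕ) (hn₀ : 1 ≤ n₀)
    (happrox : ∀ F : Finset H, ∀ ε : ℝ, 0 < ε →
      ∃ X : Finset H, X.card ≤ n₀ ∧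
        ∀ x ∈ F, ∃ v ∈ Submodule.span ℂ
          {w : H | ∃ a : H →L[ℂ] H, a ∈ 𝒜 ∧ ∃ ξ ∈ X, w = a ξ}, ‖x - v‖ < ε) :
    ∃ X : Finset H, X.card ≤ n₀ ∧
      (Submodule.span ℂ
        {w : H | ∃ a : H →L[ℂ] H, a ∈ 𝒜 ∧ ∃ ξ ∈ X, w = a ξ}).topologicalClosure = ⊤ := by
  have : IsMulCommutative 𝒜.toStarSubalgebra :=
    ⟨⟨fun x y ↦ Subtype.ext (habelian x x.2 y y.2)⟩⟩
  exact abelian_vonNeumann_approx_cyclic_implies_cyclic_general 𝒜.toStarSubalgebra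
    (containsKernelProjections_vonNeumannAlgebra 𝒜) n₀ happrox
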